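/- arXiv:2408.06573 — 3 statements merged into one kernel-verified Lean document; each statement's English description precedes it below -/
import Mathlib

section
/- Let μ be a Borel probability measure on ℝ and let G_μ(z) = ∫_ℝ (z − t)⁻¹ dμ(t) for z ∈ ℍ. Then the quantity (1/|G_μ(λ)|²) · ∫_ℝ |(λ − t)⁻¹ − G_μ(λ)|² dμ(t) tends to 0 as λ → ∞ nontangentially; that is, for every C > 0 and ε > 0 there exists R > 0 such that this quantity is less than ε whenever λ ∈ ℍ, |λ| > R, and |Re λ| ≤ C·Im λ. -/
open MeasureTheory

/-!
Multiply the resolvent by `l`: with `f_l(t) = l (l - t)⁻¹` and `m_l = ∫ f_l dμ = l G_μ(l)`, the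
normalized variance equals `∫ ‖f_l - m_l‖² dμ / ‖m_l‖²`. In the cone `|Re l| ≤ C Im l` one has
`‖f_l(t)‖ ≤ ‖l‖ / Im l ≤ C + 1` (`norm_mul_resolvent_le`), and `f_l(t) → 1` for each fixed `t` as
`l → ∞`. Dominated convergence therefore gives `m_l → 1`, and a second application gives
`∫ ‖f_l - m_l‖² dμ → 0`, so the quotient tends to `0 / 1`.
-/

/-- The filter of nontangential convergence to `∞`, in the cone of aperture `C`. -/
noncomputable def nontangentialAtInfty (C : ℝ) : Filter ℂ :=
  Filter.comap (fun l : ℂ => ‖l‖) Filter.atTop ⊓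
    Filter.principal {l : ℂ | 0 < l.im ∧ |l.re| ≤ C * l.im}

instance (C : ℝ) : (nontangentialAtInfty C).IsCountablyGenerated := by
  unfold nontangentialAtInfty; infer_instance

lemma eventually_mem_cone (C : ℝ) :
    ∀ᶠ l : ℂ in nontangentialAtInfty C, 0 < l.im ∧ |l.re| ≤ C * l.im :=
  Filter.mem_inf_of_right (Filter.mem_principal_self _)

lemma tendsto_norm_nontangential (C : ℝ) :
    Filter.Tendsto (fun l : ℂ => ‖l‖) (nontangentialAtInfty C) Filter.atTop :=
  Filter.tendsto_comap.mono_left inf_le_left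

lemma sub_ofReal_ne_zero {l : ℂ} (hl : 0 < l.im) (t : ℝ) : l - (t : ℂ) ≠ 0 := by
  intro h
  have := congrArg Complex.im h
  simp at this
  exact hl.ne' this

/-- Domination of the rescaled resolvent, uniform over the cone: `‖l - t‖ ≥ Im l` while
`‖l‖ ≤ |Re l| + Im l ≤ (C + 1) Im l`. -/
lemma norm_mul_resolvent_le {C : ℝ} {l : ℂ} (hl : 0 < l.im) (hC : |l.re| ≤ C * l.im) (t : ℝ) :
    ‖l * (l - (t : ℂ))⁻¹‖ ≤ C + 1 := by
  have h1 : l.im ≤ ‖l - (t : ℂ)‖ := by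
    have := Complex.abs_im_le_norm (l - (t : ℂ))
    simp at this
    exact (le_abs_self _).trans this
  have h2 : ‖l‖ ≤ (C + 1) * l.im := by
    have := Complex.norm_le_abs_re_add_abs_im l
    rw [abs_of_pos hl] at this
    linarith
  have hC1 : 0 ≤ C + 1 := by
    by_contra! h
    nlinarith [norm_nonneg l]
  rw [norm_mul, norm_inv, ← div_eq_mul_inv, div_le_iff₀ (hl.trans_le h1)]
  exact h2.trans (mul_le_mul_of_nonneg_left h1 hC1)

lemma measurable_mul_resolvent (l : ℂ) : Measurable fun t : ℝ => l * (l - (t : ℂ))⁻¹ := by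
  fun_prop

lemma tendsto_mul_resolvent (C t : ℝ) :
    Filter.Tendsto (fun l : ℂ => l * (l - (t : ℂ))⁻¹) (nontangentialAtInfty C) (nhds 1) := by
  have hcob : Filter.Tendsto (fun l : ℂ => l) (nontangentialAtInfty C)
      (Bornology.cobounded ℂ) :=
    tendsto_norm_atTop_iff_cobounded.1 (tendsto_norm_nontangential C)
  have hinv := Filter.tendsto_inv₀_cobounded.comp hcob
  have h : Filter.Tendsto (fun l : ℂ => (1 - (t : ℂ) * l⁻¹)⁻¹) (nontangentialAtInfty C)
      (nhds 1) := by
    have := ((hinv.const_mul (t : ℂ)).const_sub 1).inv₀ (by simp)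
    simpa using this
  refine h.congr' ?_
  filter_upwards [eventually_mem_cone C] with l hl
  have hl0 : l ≠ 0 := by simpa using sub_ofReal_ne_zero hl.1 0
  have : 1 - (t : ℂ) * l⁻¹ = (l - t) * l⁻¹ := by field_simp
  rw [this, mul_inv, inv_inv, mul_comm]

lemma tendsto_integral_mul_resolvent (μ : Measure ℝ) [IsProbabilityMeasure μ] (C : ℝ) :
    Filter.Tendsto (fun l : ℂ => ∫ t : ℝ, l * (l - (t : ℂ))⁻¹ ∂μ)
      (nontangentialAtInfty C) (nhds 1) := by
  have := tendsto_integral_filter_of_dominated_convergence (μ := μ)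
    (F := fun (l : ℂ) (t : ℝ) => l * (l - (t : ℂ))⁻¹) (f := fun _ => (1 : ℂ))
    (l := nontangentialAtInfty C) (fun _ => C + 1)
    (.of_forall fun l => (measurable_mul_resolvent l).aestronglyMeasurable)
    ((eventually_mem_cone C).mono fun l hl =>
      .of_forall fun t => norm_mul_resolvent_le hl.1 hl.2 t)
    (integrable_const _) (.of_forall fun t => tendsto_mul_resolvent C t)
  simpa using this

lemma tendsto_integral_centered_sq (μ : Measure ℝ) [IsProbabilityMeasure μ] (C : ℝ) :
    Filter.Tendsto (fun l : ℂ => ∫ t : ℝ, ‖l * (l - (t : ℂ))⁻¹ -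
        ∫ s : ℝ, l * (l - (s : ℂ))⁻¹ ∂μ‖ ^ 2 ∂μ)
      (nontangentialAtInfty C) (nhds 0) := by
  have := tendsto_integral_filter_of_dominated_convergence (μ := μ)
    (F := fun (l : ℂ) (t : ℝ) => ‖l * (l - (t : ℂ))⁻¹ -
        ∫ s : ℝ, l * (l - (s : ℂ))⁻¹ ∂μ‖ ^ 2) (f := fun _ => (0 : ℝ))
    (l := nontangentialAtInfty C) (fun _ => ((C + 1) + (C + 1)) ^ 2)
    (.of_forall fun l =>
      (((measurable_mul_resolvent l).sub_const _).norm.pow_const 2).aestronglyMeasurable)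
    ((eventually_mem_cone C).mono fun l hl => .of_forall fun t => by
      have hm : ‖∫ s : ℝ, l * (l - (s : ℂ))⁻¹ ∂μ‖ ≤ C + 1 := by
        simpa using norm_integral_le_of_norm_le_const (μ := μ)
          (.of_forall fun s => norm_mul_resolvent_le hl.1 hl.2 s)
      rw [norm_pow, norm_norm]
      gcongr
      exact (norm_sub_le _ _).trans (add_le_add (norm_mul_resolvent_le hl.1 hl.2 t) hm))
    (integrable_const _)
    (.of_forall fun t => by
      simpa using
        ((tendsto_mul_resolvent C t).sub (tendsto_integral_mul_resolvent μ C)).norm.pow 2)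
  simpa using this

/-- For a Borel probability measure `μ` on `ℝ`,
`(1/|G_μ(λ)|²) · ∫ |(λ - t)⁻¹ - G_μ(λ)|² dμ(t) → 0` as `λ → ∞` nontangentially in the
upper half-plane, where `G_μ` is the Cauchy transform of `μ`. -/
theorem normalized_centered_resolvent_variance_nontangential_limit
    (μ : Measure ℝ) [IsProbabilityMeasure μ] :
    ∀ C > (0:ℝ), ∀ ε > (0:ℝ), ∃ R > (0:ℝ), ∀ l : ℂ,
      0 < l.im → R < ‖l‖ → |l.re| ≤ C * l.im →
      (∫ t : ℝ, ‖(l - (t:ℂ))⁻¹ - ∫ s : ℝ, (l - (s:ℂ))⁻¹ ∂μ‖^2 ∂μ) /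
        ‖∫ s : ℝ, (l - (s:ℂ))⁻¹ ∂μ‖^2 < ε := by
  intro C _ ε hε
  have hlim := (tendsto_integral_centered_sq μ C).div
    ((tendsto_integral_mul_resolvent μ C).norm.pow 2) (by simp)
  rw [zero_div] at hlim
  have hev := hlim.eventually (gt_mem_nhds hε)
  rw [nontangentialAtInfty, Filter.eventually_inf_principal, Filter.eventually_comap] at hev
  obtain ⟨R, hR⟩ := Filter.eventually_atTop.1 hev
  refine ⟨max R 1, by positivity, fun l hl hRl hC => ?_⟩
  have key := hR ‖l‖ ((le_max_left _ _).trans hRl.le) l rfl ⟨hl, hC⟩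
  have hl0 : l ≠ 0 := by simpa using sub_ofReal_ne_zero hl 0
  have hn : ‖l‖ ^ 2 ≠ 0 := by positivity
  -- The factor `‖l‖²` cancels between numerator and denominator.
  simp only [Pi.div_apply, integral_const_mul, ← mul_sub, norm_mul, mul_pow] at key
  rwa [mul_div_mul_left _ _ hn] at key
end

section
/- Let μ₁ and μ₂ be Borel probability measures on ℝ₊ = [0, +∞), and let λ₁, λ₂, λ, α ∈ ℂ ∖ {0} satisfy: (1) 1/λ₁ ∉ supp(μ₁) and 1/λ₂ ∉ supp(μ₂); (2) ψ_{μ₁}(λ₁) = ψ_{μ₂}(λ₂) = α with α ≠ −1; (3) λ₁λ₂ = λ·α/(1 + α). For j = 1, 2 set V_j = ∫_{ℝ₊} (1 − λ_j t)⁻² dμ_j(t) − (∫_{ℝ₊} (1 − λ_j t)⁻¹ dμ_j(t))². Then k_{μ₁}′(λ₁) · k_{μ₂}′(λ₂) = V₁·V₂ / (λ²·α²·(α + 1)²). -/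
/-!
For a probability measure `μ` with `1/λ ∉ supp μ` and `ψ_μ(λ) = α`, a single factor is
`k_μ'(λ) = V / (λ² (1 + α)²)`. Indeed `k = ψ / ((1 + ψ) z)` gives
`k' = (z ψ' - ψ - ψ²) / (z² (1 + ψ)²)`, while `1 + ψ(z) = ∫ (1 - zt)⁻¹ dμ` and
`z ψ'(z) = ∫ zt (1 - zt)⁻² dμ = ∫ (1 - zt)⁻² dμ - ∫ (1 - zt)⁻¹ dμ`, so the numerator is the
variance term `V` (`hasDerivAt_k`). The product formula follows on
substituting `λ₁ λ₂ (1 + α) = λ α`.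

Differentiation under the integral sign (`hasDerivAt_psi`) rests on a bound
`1, |t| ≤ K ‖1 - zt‖` valid for almost all `t`, uniformly for `z` near `λ`
(`exists_uniform_bound`). It holds because the support is closed, hence at positive distance
from `1/λ`, and is conull.
-/

open MeasureTheory

/-- The topological support of a measure: the set of points all of whose neighborhoods
have positive measure. -/
def Measure.msupport {α : Type*} [TopologicalSpace α] {m : MeasurableSpace α}
    (μ : Measure α) : Set α :=
  {x | ∀ U ∈ nhds x, 0 < μ U}

open Topology

/-- Near a point `l` with `l⁻¹` off the support, `‖1 - z t‖` dominates both `1` and `|t|`, up to a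
constant, uniformly in `z`. -/
lemma exists_uniform_bound (μ : Measure ℝ) (l : ℂ) (hl : l ≠ 0)
    (hs : ∀ t ∈ Measure.msupport μ, (t : ℂ) ≠ l⁻¹) :
    ∃ K > 0, ∃ s ∈ 𝓝 l, ∀ᵐ t : ℝ ∂μ, ∀ z ∈ s,
      1 ≤ K * ‖1 - z * (t : ℂ)‖ ∧ ‖(t : ℂ)‖ ≤ K * ‖1 - z * (t : ℂ)‖ := by
  have hsupp : Measure.msupport μ = μ.support := by
    ext x
    exact (Measure.mem_support_iff_forall x).symm
  have hclosed : IsClosed ((fun t : ℝ => (t : ℂ)) '' Measure.msupport μ) := by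
    rw [hsupp]
    exact Complex.isometry_ofReal.isClosedEmbedding.isClosedMap _ Measure.isClosed_support
  have hmem : ((fun t : ℝ => (t : ℂ)) '' Measure.msupport μ)ᶜ ∈ 𝓝 l⁻¹ := by
    apply hclosed.isOpen_compl.mem_nhds
    rintro ⟨t, ht, h⟩
    exact hs t ht h
  obtain ⟨δ, hδ, hball⟩ := Metric.mem_nhds_iff.1 hmem
  have hl' : 0 < ‖l‖ := norm_pos_iff.2 hl
  -- `‖1 - l t‖ = ‖l‖ ‖l⁻¹ - t‖ ≥ ‖l‖ δ` and `|t| ≤ ‖l⁻¹‖ + ‖l⁻¹ - t‖`; `K` serves at `z = l`.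
  obtain ⟨K, hK, hK1, hK2⟩ : ∃ K > 0, 1 ≤ K * (‖l‖ * δ) ∧ ‖l⁻¹‖ * (1 + ‖l‖⁻¹ * δ⁻¹) ≤ K := by
    refine ⟨‖l‖⁻¹ * δ⁻¹ + ‖l⁻¹‖ * (1 + ‖l‖⁻¹ * δ⁻¹), by positivity, ?_,
      le_add_of_nonneg_left (by positivity)⟩
    have h1 : (‖l‖⁻¹ * δ⁻¹) * (‖l‖ * δ) = 1 := by field_simp
    have h2 : 0 ≤ ‖l⁻¹‖ * (1 + ‖l‖⁻¹ * δ⁻¹) * (‖l‖ * δ) := by positivity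
    linarith [add_mul (‖l‖⁻¹ * δ⁻¹) (‖l⁻¹‖ * (1 + ‖l‖⁻¹ * δ⁻¹)) (‖l‖ * δ)]
  refine ⟨2 * K, by positivity, Metric.ball l (1 / (2 * K)),
    Metric.ball_mem_nhds _ (by positivity), ?_⟩
  have hae : ∀ᵐ t ∂μ, t ∈ Measure.msupport μ := by
    rw [hsupp]
    exact Measure.support_mem_ae
  filter_upwards [hae] with t ht z hz
  have hdist : δ ≤ ‖(t : ℂ) - l⁻¹‖ := by
    by_contra! hlt
    exact hball (by simpa [dist_eq_norm] using hlt) ⟨t, ht, rfl⟩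
  have hnorm : ‖1 - l * (t : ℂ)‖ = ‖l‖ * ‖(t : ℂ) - l⁻¹‖ := by
    rw [← norm_mul, ← norm_neg]
    congr 1
    field_simp
    ring
  have hlow : ‖l‖ * δ ≤ ‖1 - l * (t : ℂ)‖ := by
    rw [hnorm]
    gcongr
  have hone : 1 ≤ K * ‖1 - l * (t : ℂ)‖ := hK1.trans (by gcongr)
  have ht_le : ‖(t : ℂ)‖ ≤ K * ‖1 - l * (t : ℂ)‖ := by
    have h1 : (t : ℂ) = l⁻¹ * (1 - (1 - l * t)) := by field_simp; ring
    have h2 : ‖(t : ℂ)‖ ≤ ‖l⁻¹‖ * (1 + ‖1 - l * (t : ℂ)‖) := by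
      calc ‖(t : ℂ)‖ = ‖l⁻¹‖ * ‖1 - (1 - l * (t : ℂ))‖ := by rw [← norm_mul, ← h1]
        _ ≤ _ := by
          gcongr
          simpa using norm_sub_le (1 : ℂ) (1 - l * (t : ℂ))
    have h3 : 1 ≤ ‖l‖⁻¹ * δ⁻¹ * ‖1 - l * (t : ℂ)‖ := by
      calc 1 = ‖l‖⁻¹ * δ⁻¹ * (‖l‖ * δ) := by field_simp
        _ ≤ _ := by gcongr
    calc ‖(t : ℂ)‖ ≤ ‖l⁻¹‖ * (1 + ‖1 - l * (t : ℂ)‖) := h2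
      _ ≤ ‖l⁻¹‖ * (‖l‖⁻¹ * δ⁻¹ * ‖1 - l * (t : ℂ)‖ + ‖1 - l * (t : ℂ)‖) := by gcongr
      _ = ‖l⁻¹‖ * (1 + ‖l‖⁻¹ * δ⁻¹) * ‖1 - l * (t : ℂ)‖ := by ring
      _ ≤ _ := by gcongr
  have hz' : ‖z - l‖ ≤ 1 / (2 * K) := (mem_ball_iff_norm.1 hz).le
  have hhalf : K * ‖1 - l * (t : ℂ)‖ ≤ 2 * K * ‖1 - z * (t : ℂ)‖ := by
    have h1 : ‖1 - l * (t : ℂ)‖ ≤ ‖1 - z * (t : ℂ)‖ + ‖z - l‖ * ‖(t : ℂ)‖ := by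
      rw [← norm_mul]
      refine le_trans (le_of_eq ?_) (norm_add_le _ _)
      congr 1
      ring
    have h2 : ‖z - l‖ * ‖(t : ℂ)‖ ≤ 1 / (2 * K) * (K * ‖1 - l * (t : ℂ)‖) := by gcongr
    have h3 : 1 / (2 * K) * (K * ‖1 - l * (t : ℂ)‖) = ‖1 - l * (t : ℂ)‖ / 2 := by field_simp
    have h4 : ‖1 - l * (t : ℂ)‖ ≤ 2 * ‖1 - z * (t : ℂ)‖ := by linarith
    calc K * ‖1 - l * (t : ℂ)‖ ≤ K * (2 * ‖1 - z * (t : ℂ)‖) := by gcongr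
      _ = _ := by ring
  exact ⟨hone.trans hhalf, ht_le.trans hhalf⟩

/-- Differentiation of `ψ_μ` under the integral sign, together with the integrability and the
nonvanishing needed to rewrite `ψ_μ` and its derivative by powers of `(1 - l t)⁻¹`. -/
lemma hasDerivAt_psi (μ : Measure ℝ) [IsProbabilityMeasure μ] (l : ℂ) (hl : l ≠ 0)
    (hs : ∀ t ∈ Measure.msupport μ, (t : ℂ) ≠ l⁻¹) :
    HasDerivAt (fun z : ℂ => ∫ t : ℝ, z * t / (1 - z * t) ∂μ)
      (∫ t : ℝ, (t : ℂ) / (1 - l * t) ^ 2 ∂μ) l ∧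
    Integrable (fun t : ℝ => (1 - l * t : ℂ)⁻¹) μ ∧
    Integrable (fun t : ℝ => ((1 - l * t : ℂ) ^ 2)⁻¹) μ ∧
    ∀ᵐ t : ℝ ∂μ, (1 - l * t : ℂ) ≠ 0 := by
  obtain ⟨K, hK, s, hsl, hb⟩ := exists_uniform_bound μ l hl hs
  have hne : ∀ᵐ t : ℝ ∂μ, ∀ z ∈ s, (1 - z * t : ℂ) ≠ 0 := by
    filter_upwards [hb] with t ht z hz h0
    have := (ht z hz).1
    rw [h0] at this
    norm_num at this
  have hbl : ∀ᵐ t : ℝ ∂μ, ‖(1 - l * t : ℂ)⁻¹‖ ≤ K := by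
    filter_upwards [hb, hne] with t ht h0
    rw [norm_inv, inv_le_iff_one_le_mul₀ (norm_pos_iff.2 (h0 l (mem_of_mem_nhds hsl)))]
    exact (ht l (mem_of_mem_nhds hsl)).1
  have hnel : ∀ᵐ t : ℝ ∂μ, (1 - l * t : ℂ) ≠ 0 :=
    hne.mono fun t ht => ht l (mem_of_mem_nhds hsl)
  have hint1 : Integrable (fun t : ℝ => (1 - l * t : ℂ)⁻¹) μ :=
    Integrable.of_bound (by fun_prop) K hbl
  have hint2 : Integrable (fun t : ℝ => ((1 - l * t : ℂ) ^ 2)⁻¹) μ := by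
    refine Integrable.of_bound (Measurable.aestronglyMeasurable (by fun_prop)) (K ^ 2) ?_
    filter_upwards [hbl] with t ht
    rw [← inv_pow, norm_pow]
    gcongr
  refine ⟨?_, hint1, hint2, hnel⟩
  refine (hasDerivAt_integral_of_dominated_loc_of_deriv_le (bound := fun _ => K ^ 2)
    (F' := fun (z : ℂ) (t : ℝ) => (t : ℂ) / (1 - z * t) ^ 2) hsl ?_ ?_ ?_ ?_
    (integrable_const _) ?_).2
  · exact Filter.Eventually.of_forall fun z => Measurable.aestronglyMeasurable (by fun_prop)
  · refine (hint1.sub (integrable_const 1)).congr ?_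
    filter_upwards [hnel] with t ht
    simp only [Pi.sub_apply]
    field_simp
    ring
  · exact Measurable.aestronglyMeasurable (by fun_prop)
  · filter_upwards [hb, hne] with t ht h0 z hz
    have hpos := norm_pos_iff.2 (h0 z hz)
    obtain ⟨h1, h2⟩ := ht z hz
    rw [norm_div, norm_pow, div_le_iff₀ (by positivity)]
    calc ‖(t : ℂ)‖ ≤ 1 * (K * ‖1 - z * (t : ℂ)‖) := by rwa [one_mul]
      _ ≤ (K * ‖1 - z * (t : ℂ)‖) * (K * ‖1 - z * (t : ℂ)‖) := by gcongr
      _ = _ := by ring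
  · filter_upwards [hne] with t h0 z hz
    have h1 : HasDerivAt (fun z : ℂ => z * (t : ℂ)) (t : ℂ) z := by
      simpa using (hasDerivAt_id z).mul_const (t : ℂ)
    refine (h1.div (h1.const_sub 1) (h0 z hz)).congr_deriv ?_
    congr 1
    ring

/-- The single-measure formula `k_μ'(l) = V / (l² (1 + α)²)`. -/
lemma hasDerivAt_k (μ : Measure ℝ) [IsProbabilityMeasure μ] (l α : ℂ) (hl : l ≠ 0)
    (hα1 : α ≠ -1) (hs : ∀ t ∈ Measure.msupport μ, (t : ℂ) ≠ l⁻¹)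
    (hψ : (∫ t : ℝ, l * t / (1 - l * t) ∂μ) = α) :
    HasDerivAt (fun z : ℂ =>
        ((∫ t : ℝ, z * t / (1 - z * t) ∂μ) / (1 + ∫ t : ℝ, z * t / (1 - z * t) ∂μ)) / z)
      (((∫ t : ℝ, ((1 - l * t : ℂ)^2)⁻¹ ∂μ) - (∫ t : ℝ, (1 - l * t : ℂ)⁻¹ ∂μ)^2) /
        (l ^ 2 * (1 + α) ^ 2)) l := by
  obtain ⟨hd, hi1, hi2, hne⟩ := hasDerivAt_psi μ l hl hs
  have h1 : 1 + α ≠ 0 := fun h => hα1 (by linear_combination h)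
  have hM1 : (∫ t : ℝ, (1 - l * t : ℂ)⁻¹ ∂μ) = 1 + α := by
    have h : (∫ t : ℝ, l * t / (1 - l * t) ∂μ) = ∫ t : ℝ, ((1 - l * t : ℂ)⁻¹ - 1) ∂μ := by
      refine integral_congr_ae ?_
      filter_upwards [hne] with t ht
      field_simp
      ring
    rw [integral_sub hi1 (integrable_const _), hψ] at h
    simp only [integral_const, probReal_univ, one_smul] at h
    linear_combination -h
  have hM2 : l * (∫ t : ℝ, (t : ℂ) / (1 - l * t) ^ 2 ∂μ) =
      (∫ t : ℝ, ((1 - l * t : ℂ)^2)⁻¹ ∂μ) - (1 + α) := by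
    rw [← hM1, ← integral_sub hi2 hi1, ← integral_const_mul]
    refine integral_congr_ae ?_
    filter_upwards [hne] with t ht
    field_simp
    ring
  refine ((hd.div (hd.const_add 1) (by rwa [hψ])).div (hasDerivAt_id l) hl).congr_deriv ?_
  simp only [Pi.div_apply, id, hψ, hM1]
  rw [eq_add_of_sub_eq hM2.symm]
  field_simp
  ring

/-- For probability measures `μ₁, μ₂` on `ℝ₊` and points `λ₁, λ₂, λ, α ≠ 0` with
`1/λⱼ ∉ supp(μⱼ)`, `ψ_{μ₁}(λ₁) = ψ_{μ₂}(λ₂) = α ≠ -1` and `λ₁λ₂ = λα/(1+α)`, the product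
of the derivatives of `k_{μⱼ} = η_{μⱼ}(z)/z` satisfies
`k_{μ₁}'(λ₁)·k_{μ₂}'(λ₂) = V₁V₂/(λ²α²(α+1)²)`, where `Vⱼ` is the variance term
`∫ (1-λⱼt)⁻² dμⱼ - (∫ (1-λⱼt)⁻¹ dμⱼ)²`. -/
theorem k_deriv_product_formula
    (μ₁ μ₂ : Measure ℝ) [IsProbabilityMeasure μ₁] [IsProbabilityMeasure μ₂]
    (hpos₁ : Measure.msupport μ₁ ⊆ Set.Ici 0)
    (hpos₂ : Measure.msupport μ₂ ⊆ Set.Ici 0)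
    (l₁ l₂ l α : ℂ) (hl₁ : l₁ ≠ 0) (hl₂ : l₂ ≠ 0) (hl : l ≠ 0) (hα : α ≠ 0)
    (hα1 : α ≠ -1)
    (hs₁ : ∀ t ∈ Measure.msupport μ₁, (t : ℂ) ≠ l₁⁻¹)
    (hs₂ : ∀ t ∈ Measure.msupport μ₂, (t : ℂ) ≠ l₂⁻¹)
    (hψ₁ : (∫ t : ℝ, l₁ * t / (1 - l₁ * t) ∂μ₁) = α)
    (hψ₂ : (∫ t : ℝ, l₂ * t / (1 - l₂ * t) ∂μ₂) = α)
    (hll : l₁ * l₂ = l * α / (1 + α)) :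
    deriv (fun z : ℂ =>
        ((∫ t : ℝ, z * t / (1 - z * t) ∂μ₁) / (1 + ∫ t : ℝ, z * t / (1 - z * t) ∂μ₁)) / z) l₁ *
    deriv (fun z : ℂ =>
        ((∫ t : ℝ, z * t / (1 - z * t) ∂μ₂) / (1 + ∫ t : ℝ, z * t / (1 - z * t) ∂μ₂)) / z) l₂ =
    (((∫ t : ℝ, ((1 - l₁ * t : ℂ)^2)⁻¹ ∂μ₁) - (∫ t : ℝ, (1 - l₁ * t : ℂ)⁻¹ ∂μ₁)^2) *
     ((∫ t : ℝ, ((1 - l₂ * t : ℂ)^2)⁻¹ ∂μ₂) - (∫ t : ℝ, (1 - l₂ * t : ℂ)⁻¹ ∂μ₂)^2)) /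
      (l^2 * α^2 * (α + 1)^2) := by
  rw [(hasDerivAt_k μ₁ l₁ α hl₁ hα1 hs₁ hψ₁).deriv, (hasDerivAt_k μ₂ l₂ α hl₂ hα1 hs₂ hψ₂).deriv]
  have h1 : 1 + α ≠ 0 := fun h => hα1 (by linear_combination h)
  rw [div_mul_div_comm]
  congr 1
  have h2 : l₁ * l₂ * (1 + α) = l * α := by rw [hll, div_mul_cancel₀ _ h1]
  linear_combination ((l₁ * l₂ * (1 + α)) + l * α) * (1 + α) ^ 2 * h2
end

section
/- Let μ be a Borel probability measure on the unit circle 𝕋 = {t ∈ ℂ : |t| = 1}, and let z ∈ 𝕋 be such that 1 − zt ≠ 0 for every t ∈ supp(μ). Set m₁ = ∫_𝕋 (1 − zt)⁻¹ dμ(t) and m₂ = ∫_𝕋 (1 − zt)⁻² dμ(t). Then ∫_𝕋 |(1 − zt)⁻¹ − m₁|² dμ(t) = |m₂ − m₁²|. -/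
/-!
For `|w| = 1` and `w ≠ 1` the real part of `(1 - w)⁻¹` is `1/2`. Hence `g t = (1 - z t)⁻¹` has real
part `1/2` on `supp μ`, its mean `m₁` also has real part `1/2`, and `g - m₁` is purely imaginary
`μ`-almost everywhere. Therefore `|g - m₁|² = -(g - m₁)²`, and integrating the right-hand side gives
`-(m₂ - m₁²)`. The left-hand integral is a nonnegative real, so taking norms gives the claim.
-/

open MeasureTheory

lemma re_inv_one_sub {w : ℂ} (hw : ‖w‖ = 1) (h : 1 - w ≠ 0) : ((1 - w)⁻¹).re = 1 / 2 := by
  have hn : w.re * w.re + w.im * w.im = 1 := by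
    rw [← Complex.normSq_apply, Complex.normSq_eq_norm_sq, hw, one_pow]
  have h0 : Complex.normSq (1 - w) ≠ 0 := by simpa [Complex.normSq_eq_zero] using h
  have h1 : Complex.normSq (1 - w) = 2 * (1 - w.re) := by
    rw [Complex.normSq_apply]
    simp only [Complex.sub_re, Complex.sub_im, Complex.one_re, Complex.one_im]
    linarith
  rw [Complex.inv_re, div_eq_iff h0, h1]
  simp only [Complex.sub_re, Complex.one_re]
  ring

lemma norm_sq_eq_neg_sq {w : ℂ} (hw : w.re = 0) : ((‖w‖ ^ 2 : ℝ) : ℂ) = -w ^ 2 := by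
  rw [← Complex.normSq_eq_norm_sq, Complex.normSq_apply]
  apply Complex.ext <;> simp [hw, pow_two]

lemma ae_mem_msupport (μ : Measure ℂ) : ∀ᵐ t ∂μ, t ∈ Measure.msupport μ := by
  filter_upwards [MeasureTheory.Measure.support_mem_ae (μ := μ)] with t ht
  exact (MeasureTheory.Measure.mem_support_iff_forall t).1 ht

lemma isCompact_msupport {μ : Measure ℂ}
    (hsupp : Measure.msupport μ ⊆ Metric.sphere (0 : ℂ) 1) : IsCompact (Measure.msupport μ) := by
  have he : Measure.msupport μ = μ.support :=
    Set.ext fun t => (MeasureTheory.Measure.mem_support_iff_forall t).symm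
  refine (isCompact_sphere (0 : ℂ) 1).of_isClosed_subset ?_ hsupp
  rw [he]
  exact MeasureTheory.Measure.isClosed_support

/-- A measurable function that is continuous on the compact support of a finite measure is bounded
there, hence integrable. -/
lemma integrable_of_continuousOn_msupport {μ : Measure ℂ} [IsFiniteMeasure μ] {f : ℂ → ℂ}
    (hK : IsCompact (Measure.msupport μ)) (hf : Measurable f)
    (hc : ContinuousOn f (Measure.msupport μ)) : Integrable f μ := by
  obtain ⟨C, hC⟩ := hK.exists_bound_of_continuousOn hc
  refine Integrable.of_bound hf.aestronglyMeasurable C ?_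
  filter_upwards [ae_mem_msupport μ] with t ht using hC t ht

/-- For a Borel probability measure `μ` on the unit circle and `z` on the unit circle with
`1 - zt ≠ 0` for all `t ∈ supp(μ)`: with `m₁ = ∫ (1-zt)⁻¹ dμ(t)` and `m₂ = ∫ (1-zt)⁻² dμ(t)`,
the variance `∫ |(1-zt)⁻¹ - m₁|² dμ(t)` equals `|m₂ - m₁²|`. -/
theorem circle_variance_eq_abs
    (μ : Measure ℂ) [IsProbabilityMeasure μ]
    (hsupp : Measure.msupport μ ⊆ Metric.sphere (0 : ℂ) 1)
    (z : ℂ) (hz : ‖z‖ = 1)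
    (h : ∀ t ∈ Measure.msupport μ, 1 - z * t ≠ 0) :
    ∫ t, ‖(1 - z * t)⁻¹ - ∫ s, (1 - z * s)⁻¹ ∂μ‖^2 ∂μ =
      ‖(∫ t, ((1 - z * t)^2)⁻¹ ∂μ) - (∫ t, (1 - z * t)⁻¹ ∂μ)^2‖ := by
  have hK := isCompact_msupport hsupp
  have hgc : ContinuousOn (fun t : ℂ => (1 - z * t)⁻¹) (Measure.msupport μ) :=
    ContinuousOn.inv₀ (by fun_prop) h
  have hi : Integrable (fun t : ℂ => (1 - z * t)⁻¹) μ :=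
    integrable_of_continuousOn_msupport hK (by fun_prop) hgc
  have hi2 : Integrable (fun t : ℂ => ((1 - z * t) ^ 2)⁻¹) μ :=
    integrable_of_continuousOn_msupport hK (by fun_prop)
      (ContinuousOn.inv₀ (by fun_prop) fun t ht => pow_ne_zero 2 (h t ht))
  have hre : ∀ᵐ t ∂μ, ((1 - z * t)⁻¹).re = 1 / 2 := by
    filter_upwards [ae_mem_msupport μ] with t ht
    have ht1 : ‖t‖ = 1 := by simpa using hsupp ht
    exact re_inv_one_sub (by rw [norm_mul, hz, ht1, one_mul]) (h t ht)
  have hm : (∫ t, (1 - z * t)⁻¹ ∂μ).re = 1 / 2 := by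
    have h1 : ∫ t, ((1 - z * t)⁻¹).re ∂μ = (∫ t, (1 - z * t)⁻¹ ∂μ).re := integral_re hi
    rw [← h1, integral_congr_ae hre]
    simp
  set m : ℂ := ∫ t, (1 - z * t)⁻¹ ∂μ with hm_def
  have key : ((∫ t, ‖(1 - z * t)⁻¹ - m‖ ^ 2 ∂μ : ℝ) : ℂ) =
      -((∫ t, ((1 - z * t) ^ 2)⁻¹ ∂μ) - m ^ 2) := by
    rw [← integral_complex_ofReal]
    calc ∫ t, ((‖(1 - z * t)⁻¹ - m‖ ^ 2 : ℝ) : ℂ) ∂μ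
        = ∫ t, (2 * m * (1 - z * t)⁻¹ - ((1 - z * t) ^ 2)⁻¹ - m ^ 2) ∂μ := by
          refine integral_congr_ae ?_
          filter_upwards [hre] with t ht
          rw [norm_sq_eq_neg_sq (by rw [Complex.sub_re, ht, hm, sub_self]), ← inv_pow]
          ring
      _ = 2 * m * m - (∫ t, ((1 - z * t) ^ 2)⁻¹ ∂μ) - m ^ 2 := by
          have hs : Integrable (fun t : ℂ => 2 * m * (1 - z * t)⁻¹ - ((1 - z * t) ^ 2)⁻¹) μ :=
            (hi.const_mul (2 * m)).sub hi2
          rw [integral_sub hs (integrable_const _),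
            integral_sub (hi.const_mul (2 * m)) hi2, integral_const_mul, ← hm_def]
          simp
      _ = _ := by ring
  have hnn : 0 ≤ ∫ t, ‖(1 - z * t)⁻¹ - m‖ ^ 2 ∂μ := integral_nonneg fun t => sq_nonneg _
  rw [← norm_neg, ← key, Complex.norm_of_nonneg hnn]
end
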